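/- Let s > 0 and set X := √(b_{s,5}·b_{16s,5}) and Y := √(b_{s,5}/b_{16s,5}). Then (Y^8 + 1/Y^8) - 52(Y^6 + 1/Y^6) - 1024(Y^4 + 1/Y^4) - 3987(Y^2 + 1/Y^2) - 5(X + 1/X)[1076(Y + 1/Y) + 384(Y^3 + 1/Y^3) + 35(Y^5 + 1/Y^5)] - 5^2(X^2 + 1/X^2)[92(Y^2 + 1/Y^2) + 8(Y^4 + 1/Y^4) + 149] - 5^3(X^3 + 1/X^3)[12(Y + 1/Y) + (Y^3 + 1/Y^3)] - 5^4(X^4 + 1/X^4) - 7676 = 0. -/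

import Mathlib

open Real

/-- Ramanujan's theta function `φ(q) = ∑_{n=-∞}^∞ q^(n^2)`. -/
noncomputable def phi (q : ℝ) : ℝ := ∑' n : ℤ, q ^ (n ^ 2)

/-- Ramanujan's theta function `ψ(q) = ∑_{n=0}^∞ q^(n(n+1)/2)`. -/
noncomputable def psi (q : ℝ) : ℝ := ∑' n : ℕ, q ^ (n * (n + 1) / 2)

/-- `fneg q` is Ramanujan's `f(-q) = ∑_{n=-∞}^∞ (-1)^n q^(n(3n-1)/2)`. -/
noncomputable def fneg (q : ℝ) : ℝ := ∑' n : ℤ, (-1 : ℝ) ^ n * q ^ (n * (3 * n - 1) / 2)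

/-- The remarkable product of theta-functions `b_{s,t}`. -/
noncomputable def b (s t : ℝ) : ℝ :=
  t * Real.exp (-((t - 1) * (π / 4) * Real.sqrt (s / t))) *
      psi (-Real.exp (-(π * Real.sqrt (s * t)))) ^ 2 *
      phi (-Real.exp (-(2 * π * Real.sqrt (s * t)))) ^ 2 /
    (psi (-Real.exp (-(π * Real.sqrt (s / t)))) ^ 2 *
      phi (-Real.exp (-(2 * π * Real.sqrt (s / t)))) ^ 2)

open Filter Topology Finset

/-- The infinite product `∏_{i ≥ 0} (1 + x q^i)`. -/
noncomputable def qProd (x q : ℝ) : ℝ := ∏' i : ℕ, (1 + x * q ^ i)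

lemma summable_norm_mul_pow {q : ℝ} (hq : |q| < 1) (x : ℝ) :
    Summable fun i : ℕ ↦ ‖x * q ^ i‖ := by
  simp only [norm_mul, norm_pow, Real.norm_eq_abs]
  exact (summable_geometric_of_lt_one (abs_nonneg q) hq).mul_left _

lemma tendsto_qProd {q : ℝ} (hq : |q| < 1) (x : ℝ) :
    Tendsto (fun N ↦ ∏ i ∈ range N, (1 + x * q ^ i)) atTop (𝓝 (qProd x q)) :=
  (multipliable_one_add_of_summable (summable_norm_mul_pow hq x)).tendsto_prod_tprod_nat

lemma prod_range_mul_add (d N : ℕ) (x q : ℝ) :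
    ∏ i ∈ range (d * N), (1 + x * q ^ i) =
      ∏ r ∈ range d, ∏ i ∈ range N, (1 + x * q ^ r * (q ^ d) ^ i) := by
  induction N with
  | zero => simp
  | succ N ih =>
    rw [Nat.mul_succ, prod_range_add, ih, ← prod_mul_distrib]
    refine prod_congr rfl fun r _ ↦ ?_
    rw [prod_range_succ]
    ring

/-- Splitting the factors of `qProd x q` by the residue of the index modulo `d`. -/
lemma qProd_eq_prod {q : ℝ} (hq : |q| < 1) (x : ℝ) {d : ℕ} (hd : 0 < d) :
    qProd x q = ∏ r ∈ range d, qProd (x * q ^ r) (q ^ d) := by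
  have hqd : |q ^ d| < 1 := by
    rw [abs_pow]; exact pow_lt_one₀ (abs_nonneg q) hq hd.ne'
  refine tendsto_nhds_unique
    ((tendsto_qProd hq x).comp (tendsto_id.const_mul_atTop' hd)) ?_
  simp only [Function.comp_def, id, prod_range_mul_add]
  exact tendsto_finsetProd _ fun r _ ↦ tendsto_qProd hqd _

lemma qProd_mul_qProd_neg {q : ℝ} (hq : |q| < 1) (x : ℝ) :
    qProd x q * qProd (-x) q = qProd (-x ^ 2) (q ^ 2) := by
  have hq2 : |q ^ 2| < 1 := by
    rw [abs_pow]; exact pow_lt_one₀ (abs_nonneg q) hq two_ne_zero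
  refine tendsto_nhds_unique ((tendsto_qProd hq x).mul (tendsto_qProd hq (-x))) ?_
  refine (tendsto_qProd hq2 _).congr fun N ↦ ?_
  rw [← prod_mul_distrib]
  exact prod_congr rfl fun i _ ↦ by ring

lemma qProd_eq_mul {q : ℝ} (hq : |q| < 1) (x : ℝ) :
    qProd x q = (1 + x) * qProd (x * q) q := by
  refine tendsto_nhds_unique ((tendsto_qProd hq x).comp (tendsto_add_atTop_nat 1)) ?_
  refine ((tendsto_qProd hq (x * q)).const_mul (1 + x)).congr fun N ↦ ?_
  simp only [Function.comp_def, prod_range_succ', pow_zero, mul_one]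
  rw [mul_comm]
  congr 1
  exact prod_congr rfl fun i _ ↦ by ring

/-- Euler's function `∏_{n ≥ 1} (1 - q^n)`. -/
noncomputable def eulerProd (q : ℝ) : ℝ := qProd (-q) q

lemma one_sub_pow_succ_pos {q : ℝ} (h0 : 0 ≤ q) (h1 : q < 1) (i : ℕ) : 0 < 1 + -q * q ^ i := by
  have : q ^ (i + 1) < 1 := pow_lt_one₀ h0 h1 i.succ_ne_zero
  rw [pow_succ'] at this
  linarith

lemma eulerProd_pos {q : ℝ} (h0 : 0 ≤ q) (h1 : q < 1) : 0 < eulerProd q := by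
  have hq : |q| < 1 := by rwa [abs_of_nonneg h0]
  refine lt_of_le_of_ne ?_ (Ne.symm ?_)
  · exact ge_of_tendsto' (tendsto_qProd hq (-q)) fun N ↦
      prod_nonneg fun i _ ↦ (one_sub_pow_succ_pos h0 h1 i).le
  · exact tprod_one_add_ne_zero_of_summable (fun i ↦ (one_sub_pow_succ_pos h0 h1 i).ne')
      (summable_norm_mul_pow hq (-q))

/-- The finite product `∏_{n=1}^N (1 - q^n)`. -/
noncomputable def qFactorial (q : ℝ) (N : ℕ) : ℝ := ∏ i ∈ range N, (1 + -q * q ^ i)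

lemma qFactorial_succ (q : ℝ) (N : ℕ) :
    qFactorial q (N + 1) = qFactorial q N * (1 - q ^ (N + 1)) := by
  rw [qFactorial, prod_range_succ, ← qFactorial]; ring

lemma qFactorial_pos {q : ℝ} (h0 : 0 ≤ q) (h1 : q < 1) (N : ℕ) : 0 < qFactorial q N :=
  prod_pos fun i _ ↦ one_sub_pow_succ_pos h0 h1 i

lemma qFactorial_antitone {q : ℝ} (h0 : 0 ≤ q) (h1 : q < 1) : Antitone (qFactorial q) := by
  refine antitone_nat_of_succ_le fun N ↦ ?_
  rw [qFactorial_succ]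
  exact mul_le_of_le_one_right (qFactorial_pos h0 h1 N).le
    (by linarith [pow_nonneg h0 (N + 1)])

lemma tendsto_qFactorial {q : ℝ} (hq : |q| < 1) :
    Tendsto (qFactorial q) atTop (𝓝 (eulerProd q)) := tendsto_qProd hq (-q)

lemma eulerProd_le_qFactorial {q : ℝ} (h0 : 0 ≤ q) (h1 : q < 1) (N : ℕ) :
    eulerProd q ≤ qFactorial q N :=
  (qFactorial_antitone h0 h1).le_of_tendsto (tendsto_qFactorial (by rwa [abs_of_nonneg h0])) N

/-- Gaussian binomial coefficients, defined by the `q`-Pascal rule. -/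
noncomputable def gaussBinom (q : ℝ) : ℕ → ℕ → ℝ
  | _, 0 => 1
  | 0, _ + 1 => 0
  | M + 1, k + 1 => gaussBinom q M k + q ^ (k + 1) * gaussBinom q M (k + 1)

lemma gaussBinom_zero_right (q : ℝ) (M : ℕ) : gaussBinom q M 0 = 1 := by
  cases M <;> simp [gaussBinom]

lemma gaussBinom_succ_succ (q : ℝ) (M k : ℕ) : gaussBinom q (M + 1) (k + 1) =
    gaussBinom q M k + q ^ (k + 1) * gaussBinom q M (k + 1) := by
  rw [gaussBinom]

lemma gaussBinom_eq_zero (q : ℝ) {M k : ℕ} (h : M < k) : gaussBinom q M k = 0 := by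
  induction M generalizing k with
  | zero =>
    obtain ⟨k, rfl⟩ := Nat.exists_eq_add_of_lt h
    simp [gaussBinom]
  | succ M ih =>
    obtain ⟨k, rfl⟩ : ∃ j, k = j + 1 := ⟨k - 1, by omega⟩
    rw [gaussBinom_succ_succ, ih (by omega), ih (by omega)]
    simp

lemma gaussBinom_mul_qFactorial (q : ℝ) {M k : ℕ} (h : k ≤ M) :
    gaussBinom q M k * qFactorial q k * qFactorial q (M - k) = qFactorial q M := by
  induction M generalizing k with
  | zero =>
    obtain rfl : k = 0 := by omega
    simp [gaussBinom, qFactorial]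
  | succ M ih =>
    rcases k with _ | k
    · simp [gaussBinom_zero_right, qFactorial]
    · rw [gaussBinom_succ_succ, Nat.add_sub_add_right]
      have h1 := ih (k := k) (by omega)
      rcases (show k = M ∨ k + 1 ≤ M by omega) with rfl | hk
      · rw [gaussBinom_eq_zero q (Nat.lt_succ_self k), qFactorial_succ]
        linear_combination (1 - q ^ (k + 1)) * h1
      · have h2 := ih hk
        obtain ⟨j, rfl⟩ := Nat.exists_eq_add_of_le hk
        rw [show k + 1 + j - (k + 1) = j by omega] at h2
        rw [show k + 1 + j - k = j + 1 by omega] at h1 ⊢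
        rw [qFactorial_succ q (k + 1 + j), qFactorial_succ q j]
        rw [qFactorial_succ q k] at h2 ⊢
        rw [qFactorial_succ q j] at h1
        linear_combination (1 - q ^ (k + 1)) * h1 + q ^ (k + 1) * (1 - q ^ (j + 1)) * h2

lemma gaussBinom_nonneg {q : ℝ} (h0 : 0 ≤ q) (M k : ℕ) : 0 ≤ gaussBinom q M k := by
  induction M generalizing k with
  | zero => cases k <;> simp [gaussBinom]
  | succ M ih =>
    cases k with
    | zero => simp [gaussBinom]
    | succ k =>
      rw [gaussBinom_succ_succ]
      have := ih k
      have := ih (k + 1)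
      positivity

lemma gaussBinom_le {q : ℝ} (h0 : 0 ≤ q) (h1 : q < 1) (M k : ℕ) :
    gaussBinom q M k ≤ (eulerProd q)⁻¹ := by
  have hE := eulerProd_pos h0 h1
  rcases lt_or_ge M k with h | h
  · rw [gaussBinom_eq_zero q h]; positivity
  · have hM := gaussBinom_mul_qFactorial q h
    have hle : qFactorial q M ≤ qFactorial q (M - k) := qFactorial_antitone h0 h1 (Nat.sub_le _ _)
    rw [← hM] at hle
    have h3 : gaussBinom q M k * qFactorial q k ≤ 1 :=
      le_of_mul_le_mul_right (by rwa [one_mul]) (qFactorial_pos h0 h1 (M - k))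
    rw [← one_div, le_div_iff₀ hE]
    exact (mul_le_mul_of_nonneg_left (eulerProd_le_qFactorial h0 h1 k)
      (gaussBinom_nonneg h0 M k)).trans h3

/-- The `q`-binomial theorem, with base `w^2`. -/
lemma prod_one_add_mul_pow_eq_sum (w x : ℝ) (M : ℕ) :
    ∏ i ∈ range M, (1 + x * w ^ (2 * i + 1)) =
      ∑ k ∈ range (M + 1), gaussBinom (w ^ 2) M k * w ^ k ^ 2 * x ^ k := by
  induction M generalizing x with
  | zero => simp [gaussBinom]
  | succ M ih =>
    have hstep : ∏ i ∈ range (M + 1), (1 + x * w ^ (2 * i + 1)) =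
        (1 + x * w) * ∏ i ∈ range M, (1 + x * w ^ 2 * w ^ (2 * i + 1)) := by
      rw [prod_range_succ', mul_comm]
      congr 1
      · ring
      · exact prod_congr rfl fun i _ ↦ by ring
    have hlast : ∑ k ∈ range (M + 1), gaussBinom (w ^ 2) M k * w ^ k ^ 2 * (x * w ^ 2) ^ k =
        ∑ k ∈ range (M + 1), gaussBinom (w ^ 2) M (k + 1) * w ^ (k + 1) ^ 2 * (x * w ^ 2) ^ (k + 1)
          + 1 := by
      rw [sum_range_succ', sum_range_succ _ M, gaussBinom_eq_zero _ (Nat.lt_succ_self M)]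
      simp [gaussBinom_zero_right]
    rw [hstep, ih, add_mul, one_mul, mul_sum]
    rw [sum_range_succ' _ (M + 1)]
    nth_rewrite 1 [hlast]
    rw [add_right_comm, ← sum_add_distrib]
    congr 1
    · refine sum_congr rfl fun k _ ↦ ?_
      rw [gaussBinom_succ_succ]
      ring
    · simp [gaussBinom_zero_right]

lemma prod_reflect_one_add {w z : ℝ} (hw : w ≠ 0) (hz : z ≠ 0) (N : ℕ) :
    ∏ i ∈ range N, (1 + z * w⁻¹ ^ (2 * N) * w ^ (2 * i + 1)) =
      z ^ N * w⁻¹ ^ N ^ 2 * ∏ i ∈ range N, (1 + z⁻¹ * w ^ (2 * i + 1)) := by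
  have hpow : ∀ N : ℕ, ∏ i ∈ range N, (z * w⁻¹ ^ (2 * i + 1)) = z ^ N * w⁻¹ ^ N ^ 2 := by
    intro N
    induction N with
    | zero => simp
    | succ N ih => rw [prod_range_succ, ih]; ring
  rw [← hpow, ← prod_mul_distrib, ← prod_range_reflect]
  refine prod_congr rfl fun i hi ↦ ?_
  have hi' : i < N := mem_range.1 hi
  have e : w⁻¹ ^ (2 * N) * w ^ (2 * (N - 1 - i) + 1) = w⁻¹ ^ (2 * i + 1) := by
    rw [show 2 * N = (2 * i + 1) + (2 * (N - 1 - i) + 1) by omega, pow_add, mul_assoc, ← mul_pow,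
      inv_mul_cancel₀ hw, one_pow, mul_one]
  rw [mul_assoc, e, mul_add, mul_one]
  have e2 : z * w⁻¹ ^ (2 * i + 1) * (z⁻¹ * w ^ (2 * i + 1)) = 1 := by
    rw [mul_mul_mul_comm, mul_inv_cancel₀ hz, ← mul_pow, inv_mul_cancel₀ hw, one_pow, mul_one]
  rw [e2, add_comm]

/-- The finite form of the Jacobi triple product identity. -/
lemma finite_triple_product {w z : ℝ} (hw : w ≠ 0) (hz : z ≠ 0) (N : ℕ) :
    (∏ i ∈ range N, (1 + z * w ^ (2 * i + 1))) * ∏ i ∈ range N, (1 + z⁻¹ * w ^ (2 * i + 1)) =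
      ∑ k ∈ range (2 * N + 1), gaussBinom (w ^ 2) (2 * N) k *
        (w ^ ((k : ℤ) - N) ^ 2 * z ^ ((k : ℤ) - N)) := by
  have h := prod_one_add_mul_pow_eq_sum w (z * w⁻¹ ^ (2 * N)) (2 * N)
  have hsplit : ∏ i ∈ range (2 * N), (1 + z * w⁻¹ ^ (2 * N) * w ^ (2 * i + 1)) =
      z ^ N * w⁻¹ ^ N ^ 2 * ((∏ i ∈ range N, (1 + z * w ^ (2 * i + 1))) *
        ∏ i ∈ range N, (1 + z⁻¹ * w ^ (2 * i + 1))) := by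
    nth_rewrite 1 [two_mul N]
    rw [prod_range_add, prod_reflect_one_add hw hz, mul_assoc, mul_comm (∏ i ∈ range N, _)]
    congr 2
    refine prod_congr rfl fun i _ ↦ ?_
    rw [show 2 * (N + i) + 1 = 2 * N + (2 * i + 1) by ring, pow_add, mul_assoc z,
      ← mul_assoc _ (w ^ (2 * N)),
      ← mul_pow, inv_mul_cancel₀ hw, one_pow, one_mul]
  rw [hsplit] at h
  have hc : z ^ N * w⁻¹ ^ N ^ 2 ≠ 0 := by positivity
  refine mul_left_cancel₀ hc (h.trans ?_)
  rw [mul_sum]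
  refine sum_congr rfl fun k _ ↦ ?_
  have e1 : z ^ k = z ^ N * z ^ ((k : ℤ) - N) := by
    rw [← zpow_natCast z N, ← zpow_add₀ hz, add_sub_cancel, zpow_natCast]
  have e2 : w ^ k ^ 2 * w⁻¹ ^ (2 * N * k) = w⁻¹ ^ N ^ 2 * w ^ ((k : ℤ) - N) ^ 2 := by
    rw [inv_pow, inv_pow, ← zpow_natCast w, ← zpow_natCast w, ← zpow_natCast w, ← zpow_neg,
      ← zpow_neg, ← zpow_add₀ hw, ← zpow_add₀ hw]
    congr 1
    push_cast
    ring
  rw [mul_pow, ← pow_mul, e1]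
  linear_combination gaussBinom (w ^ 2) (2 * N) k * z ^ N * z ^ ((k : ℤ) - N) * e2

lemma summable_pow_sq_mul_pow {w : ℝ} (hw : |w| < 1) (z : ℝ) :
    Summable fun n : ℕ ↦ ‖w ^ n ^ 2 * z ^ n‖ := by
  have hlim : Tendsto (fun n : ℕ ↦ |w| ^ n * |z|) atTop (𝓝 0) := by
    simpa using (tendsto_pow_atTop_nhds_zero_of_lt_one (abs_nonneg w) hw).mul_const |z|
  refine Summable.of_norm_bounded_eventually_nat summable_geometric_two ?_
  filter_upwards [hlim.eventually_le_const (show (0 : ℝ) < 1 / 2 by norm_num)] with n hn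
  rw [norm_norm, norm_mul, norm_pow, norm_pow, sq, pow_mul, ← mul_pow]
  exact pow_le_pow_left₀ (by positivity) hn n

lemma summable_norm_zpow_sq_mul_zpow {w : ℝ} (hw : |w| < 1) (z : ℝ) :
    Summable fun n : ℤ ↦ ‖w ^ n ^ 2 * z ^ n‖ := by
  refine Summable.of_nat_of_neg ?_ ?_
  · exact_mod_cast summable_pow_sq_mul_pow hw z
  · simp only [neg_sq, zpow_neg, ← inv_zpow]
    exact_mod_cast summable_pow_sq_mul_pow hw z⁻¹

lemma tendsto_gaussBinom {q : ℝ} (h0 : 0 ≤ q) (h1 : q < 1) (n : ℤ) :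
    Tendsto (fun N : ℕ ↦ gaussBinom q (2 * N) (n + N).toNat) atTop (𝓝 (eulerProd q)⁻¹) := by
  have hE := (eulerProd_pos h0 h1).ne'
  have hq : |q| < 1 := by rwa [abs_of_nonneg h0]
  have ht := tendsto_qFactorial hq
  have t1 : Tendsto (fun N : ℕ ↦ 2 * N) atTop atTop := tendsto_id.const_mul_atTop' two_pos
  have t2 : ∀ m : ℤ, Tendsto (fun N : ℕ ↦ (m + N).toNat) atTop atTop := fun m ↦
    tendsto_atTop_mono (f := fun N ↦ N - m.natAbs) (fun N ↦ by omega)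
      (tendsto_sub_atTop_nat _)
  have h := (ht.comp t1).div ((ht.comp (t2 n)).mul (ht.comp (t2 (-n)))) (mul_ne_zero hE hE)
  rw [div_mul_cancel_left₀ hE] at h
  refine h.congr' ?_
  filter_upwards [eventually_ge_atTop n.natAbs] with N hN
  have hb := gaussBinom_mul_qFactorial q (M := 2 * N) (k := (n + N).toNat) (by omega)
  rw [show 2 * N - (n + N).toNat = (-n + N).toNat by omega] at hb
  have p1 := (qFactorial_pos h0 h1 (n + N).toNat).ne'
  have p2 := (qFactorial_pos h0 h1 (-n + N).toNat).ne'
  simp only [Pi.div_apply, Function.comp_def]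
  rw [div_eq_iff (mul_ne_zero p1 p2), ← hb, mul_assoc]

lemma tendsto_sum_gaussBinom {w : ℝ} (hw : |w| < 1) (z : ℝ) :
    Tendsto (fun N : ℕ ↦ ∑ k ∈ range (2 * N + 1), gaussBinom (w ^ 2) (2 * N) k *
        (w ^ ((k : ℤ) - N) ^ 2 * z ^ ((k : ℤ) - N))) atTop
      (𝓝 ((eulerProd (w ^ 2))⁻¹ * ∑' n : ℤ, w ^ n ^ 2 * z ^ n)) := by
  have h0 : 0 ≤ w ^ 2 := sq_nonneg w
  have h1 : w ^ 2 < 1 := (sq_lt_one_iff_abs_lt_one w).2 hw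
  let F : ℕ → ℤ → ℝ := fun N n ↦ if n.natAbs ≤ N then
    gaussBinom (w ^ 2) (2 * N) (n + N).toNat * (w ^ n ^ 2 * z ^ n) else 0
  have hF : ∀ N : ℕ, ∑' n, F N n = ∑ k ∈ range (2 * N + 1), gaussBinom (w ^ 2) (2 * N) k *
        (w ^ ((k : ℤ) - N) ^ 2 * z ^ ((k : ℤ) - N)) := by
    intro N
    have hinj : Function.Injective fun k : ℕ ↦ (k : ℤ) - N := fun a b hab ↦ by simpa using hab
    rw [tsum_eq_sum (s := (range (2 * N + 1)).image fun k : ℕ ↦ (k : ℤ) - N),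
      sum_image hinj.injOn]
    · refine sum_congr rfl fun k hk ↦ ?_
      have hk' := mem_range.1 hk
      simp only [F]
      rw [if_pos (by omega), sub_add_cancel, Int.toNat_natCast]
    · intro n hn
      refine if_neg fun hle ↦ hn ?_
      simp only [mem_image, mem_range]
      exact ⟨(n + N).toNat, by omega, by omega⟩
  simp only [← hF]
  rw [← tsum_mul_left]
  refine tendsto_tsum_of_dominated_convergence
    ((summable_norm_zpow_sq_mul_zpow hw z).mul_left (eulerProd (w ^ 2))⁻¹) (fun n ↦ ?_)
    (Eventually.of_forall fun N n ↦ ?_)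
  · refine ((tendsto_gaussBinom h0 h1 n).mul_const (w ^ n ^ 2 * z ^ n)).congr' ?_
    filter_upwards [eventually_ge_atTop n.natAbs] with N hN
    simp only [F, if_pos hN]
  · have hE := (eulerProd_pos h0 h1).le
    by_cases hn : n.natAbs ≤ N
    · simp only [F, if_pos hn]
      rw [norm_mul, Real.norm_of_nonneg (gaussBinom_nonneg h0 _ _)]
      exact mul_le_mul_of_nonneg_right (gaussBinom_le h0 h1 _ _) (norm_nonneg _)
    · simp only [F, if_neg hn, norm_zero]
      positivity

/-- The **Jacobi triple product identity**. -/
theorem jacobi_triple_product {w z : ℝ} (hw : |w| < 1) (hw0 : w ≠ 0) (hz : z ≠ 0) :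
    ∑' n : ℤ, w ^ n ^ 2 * z ^ n =
      eulerProd (w ^ 2) * (qProd (z * w) (w ^ 2) * qProd (z⁻¹ * w) (w ^ 2)) := by
  have h0 : 0 ≤ w ^ 2 := sq_nonneg w
  have h1 : w ^ 2 < 1 := (sq_lt_one_iff_abs_lt_one w).2 hw
  have hq : |w ^ 2| < 1 := by rwa [abs_of_nonneg h0]
  have hlim := (tendsto_qProd hq (z * w)).mul (tendsto_qProd hq (z⁻¹ * w))
  have heq := tendsto_nhds_unique (tendsto_sum_gaussBinom hw z) (hlim.congr fun N ↦ ?_)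
  · rw [← heq, mul_inv_cancel_left₀ (eulerProd_pos h0 h1).ne']
  · rw [← finite_triple_product hw0 hz]
    congr 1 <;> exact prod_congr rfl fun i _ ↦ by ring

/-- The theta series `∑ w^(n^2 + ε n)`, which specializes to `φ` at `ε = 0` and to `2ψ(w^2)` at
`ε = -1`. -/
noncomputable def shiftTheta (ε : ℤ) (w : ℝ) : ℝ := ∑' n : ℤ, w ^ (n ^ 2 + ε * n)

/-- The component of `shiftTheta ε` attached to the residue class `j` modulo `5`. -/
noncomputable def quinticTheta (ε j : ℤ) (w : ℝ) : ℝ :=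
  ∑' m : ℤ, w ^ (5 * (m ^ 2 + ε * m) + j * (2 * m + ε))

lemma quinticTheta_neg (ε j : ℤ) (w : ℝ) : quinticTheta ε (-j) w = quinticTheta ε j w := by
  rw [quinticTheta, ← ((Equiv.neg ℤ).trans (Equiv.subRight ε)).tsum_eq]
  refine tsum_congr fun m ↦ ?_
  simp only [Equiv.trans_apply, Equiv.neg_apply, Equiv.subRight_apply]
  congr 1
  ring

lemma quinticTheta_add_five {w : ℝ} (hw0 : w ≠ 0) (ε j : ℤ) :
    w ^ (2 * j + 5) * quinticTheta ε (j + 5) w = quinticTheta ε j w := by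
  rw [quinticTheta, quinticTheta, ← tsum_mul_left, ← (Equiv.subRight (1 : ℤ)).tsum_eq]
  refine tsum_congr fun m ↦ ?_
  rw [← zpow_add₀ hw0, Equiv.subRight_apply]
  congr 1
  ring

lemma quinticTheta_zero (ε : ℤ) (w : ℝ) : quinticTheta ε 0 w = shiftTheta ε (w ^ 5) := by
  refine tsum_congr fun m ↦ ?_
  rw [← zpow_natCast w 5, ← zpow_mul]
  congr 1
  push_cast
  ring

lemma summable_norm_zpow_quadratic {w : ℝ} (hw : |w| < 1) (hw0 : w ≠ 0) {A : ℕ} (hA : A ≠ 0)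
    (B C : ℤ) : Summable fun n : ℤ ↦ ‖w ^ (A * n ^ 2 + B * n + C)‖ := by
  have hwA : |w ^ A| < 1 := by
    rw [abs_pow]; exact pow_lt_one₀ (abs_nonneg w) hw hA
  refine ((summable_norm_zpow_sq_mul_zpow hwA (w ^ B)).mul_right ‖w ^ C‖).congr fun n ↦ ?_
  rw [← norm_mul, ← zpow_natCast w A, ← zpow_mul, ← zpow_mul, ← zpow_add₀ hw0, ← zpow_add₀ hw0]

/-- Multiplication by `2 + i` in the Gaussian integers, split by residue classes modulo `5`. -/
def gaussianFiveEquiv (ε : ℤ) : Fin 5 × (ℤ × ℤ) ≃ ℤ × ℤ where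
  toFun p := (2 * p.2.1 + p.2.2 + ε + (p.1 : ℕ), 2 * p.2.2 - p.2.1)
  invFun p := (⟨((p.1 - ε + 2 * p.2) % 5).toNat, by omega⟩,
    (2 * ((p.1 - ε + 2 * p.2) / 5) - p.2, (p.1 - ε + 2 * p.2) / 5))
  left_inv := by
    rintro ⟨⟨j, hj⟩, m, n⟩
    simp only [Prod.mk.injEq, Fin.mk.injEq]
    omega
  right_inv := by
    rintro ⟨a, c⟩
    simp only [Prod.mk.injEq]
    omega

lemma shiftTheta_sq_eq_sum {w : ℝ} (hw : |w| < 1) (hw0 : w ≠ 0) (ε : ℤ) :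
    shiftTheta ε w ^ 2 = ∑ j : Fin 5, w ^ (2 * ε ^ 2 + (j : ℕ) ^ 2 : ℤ) *
      (quinticTheta ε (2 * (j : ℕ)) w * quinticTheta ε (j : ℕ) w) := by
  have hs : Summable fun n : ℤ ↦ ‖w ^ (n ^ 2 + ε * n)‖ := by
    simpa using summable_norm_zpow_quadratic hw hw0 one_ne_zero ε 0
  have hK : ∀ j : ℤ, Summable fun m : ℤ ↦ ‖w ^ (5 * (m ^ 2 + ε * m) + j * (2 * m + ε))‖ := by
    intro j
    refine (summable_norm_zpow_quadratic hw hw0 (A := 5) (by norm_num) (5 * ε + 2 * j)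
      (j * ε)).congr fun m ↦ ?_
    congr 2
    push_cast
    ring
  have hterm : ∀ p : Fin 5 × (ℤ × ℤ),
      w ^ ((gaussianFiveEquiv ε p).1 ^ 2 + ε * (gaussianFiveEquiv ε p).1) *
        w ^ ((gaussianFiveEquiv ε p).2 ^ 2 + ε * (gaussianFiveEquiv ε p).2) =
      w ^ (2 * ε ^ 2 + (p.1 : ℕ) ^ 2 : ℤ) *
        (w ^ (5 * (p.2.1 ^ 2 + ε * p.2.1) + (2 * (p.1 : ℕ)) * (2 * p.2.1 + ε)) *
          w ^ (5 * (p.2.2 ^ 2 + ε * p.2.2) + (p.1 : ℕ) * (2 * p.2.2 + ε))) := by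
    intro p
    simp only [← zpow_add₀ hw0, gaussianFiveEquiv, Equiv.coe_fn_mk]
    congr 1
    ring
  rw [sq, shiftTheta, tsum_mul_tsum_of_summable_norm hs hs, ← (gaussianFiveEquiv ε).tsum_eq]
  have hsum := (gaussianFiveEquiv ε).summable_iff.2 (summable_mul_of_summable_norm hs hs)
  simp only [Function.comp_def] at hsum
  rw [hsum.tsum_prod, tsum_fintype]
  refine sum_congr rfl fun j _ ↦ ?_
  simp only [hterm]
  rw [tsum_mul_left, quinticTheta, quinticTheta,
    tsum_mul_tsum_of_summable_norm (hK _) (hK _)]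

/-- The quintic relation `H(w)^2 - w^(2ε^2) H(w^5)^2 = 4 w^(2ε^2+1) K_1 K_2` for shifted theta
series. -/
theorem shiftTheta_sq {w : ℝ} (hw : |w| < 1) (hw0 : w ≠ 0) (ε : ℤ) :
    shiftTheta ε w ^ 2 = w ^ (2 * ε ^ 2) * shiftTheta ε (w ^ 5) ^ 2 +
      4 * w ^ (2 * ε ^ 2 + 1) * (quinticTheta ε 1 w * quinticTheta ε 2 w) := by
  have h3 := quinticTheta_add_five hw0 ε (-2)
  have h4 := quinticTheta_add_five hw0 ε (-1)
  have h6 := quinticTheta_add_five hw0 ε 1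
  have h8 := quinticTheta_add_five hw0 ε 3
  norm_num [quinticTheta_neg] at h3 h4 h6 h8
  rw [shiftTheta_sq_eq_sum hw hw0]
  simp only [Fin.sum_univ_five, zpow_add₀ hw0]
  norm_num [quinticTheta_zero]
  norm_cast at *
  generalize w ^ (2 * ε ^ 2) = W
  linear_combination W * w * quinticTheta ε 2 w * h4 + W * w ^ 2 * quinticTheta ε 3 w * (h6 + h4) +
    2 * W * w * quinticTheta ε 1 w * h3 + W * w ^ 5 * quinticTheta ε 4 w * h8

/-- The triple product identity for the exponents `A n^2 + B n`. -/
lemma tsum_zpow_quadratic {w : ℝ} (hw : |w| < 1) (hw0 : w ≠ 0) {A : ℕ} (hA : A ≠ 0) (B : ℤ) :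
    ∑' n : ℤ, w ^ (A * n ^ 2 + B * n) = eulerProd (w ^ (2 * A)) *
      (qProd (w ^ (A + B)) (w ^ (2 * A)) * qProd (w ^ (A - B)) (w ^ (2 * A))) := by
  have hwA : |w ^ A| < 1 := by
    rw [abs_pow]; exact pow_lt_one₀ (abs_nonneg w) hw hA
  have h := jacobi_triple_product hwA (pow_ne_zero A hw0) (zpow_ne_zero B hw0)
  rw [← pow_mul, mul_comm A 2, ← zpow_neg, ← zpow_natCast w A, ← zpow_add₀ hw0,
    ← zpow_add₀ hw0, add_comm B, neg_add_eq_sub] at h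
  rw [← h]
  refine tsum_congr fun n ↦ ?_
  rw [← zpow_mul, ← zpow_mul, ← zpow_add₀ hw0]

lemma qProd_neg_mul_eulerProd_sq {q : ℝ} (hq : |q| < 1) :
    qProd (-q) (q ^ 2) * eulerProd (q ^ 2) = eulerProd q := by
  rw [eulerProd, eulerProd, qProd_eq_prod hq (-q) (d := 2) (by norm_num)]
  simp only [prod_range_succ, prod_range_zero]
  ring_nf

lemma qProd_mul_eulerProd {q : ℝ} (hq : |q| < 1) :
    qProd q q * eulerProd q = eulerProd (q ^ 2) :=
  qProd_mul_qProd_neg hq q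

lemma phi_neg_mul {q : ℝ} (h0 : 0 < q) (h1 : q < 1) :
    phi (-q) * eulerProd (q ^ 2) = eulerProd q ^ 2 := by
  have hq : |q| < 1 := by rwa [abs_of_pos h0]
  have h := tsum_zpow_quadratic (w := -q) (by rwa [abs_neg]) (neg_ne_zero.2 h0.ne') one_ne_zero 0
  norm_num at h
  rw [phi, h, ← qProd_neg_mul_eulerProd_sq hq]
  ring

lemma psi_eq_tsum_int (q : ℝ) : psi q = ∑' n : ℤ, q ^ (2 * n ^ 2 + n) := by
  rw [psi, ← Equiv.intEquivNat.tsum_eq]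
  refine tsum_congr fun n ↦ ?_
  rw [← zpow_natCast q]
  congr 1
  rcases n with m | m
  · have : Equiv.intEquivNat (Int.ofNat m) = 2 * m := rfl
    rw [this, show 2 * m * (2 * m + 1) / 2 = m * (2 * m + 1) by
      rw [mul_assoc]; exact Nat.mul_div_cancel_left _ two_pos]
    simp only [Int.ofNat_eq_natCast]
    push_cast
    ring
  · have : Equiv.intEquivNat (Int.negSucc m) = 2 * m + 1 := rfl
    rw [this, show (2 * m + 1) * (2 * m + 1 + 1) / 2 = (2 * m + 1) * (m + 1) by
      rw [show (2 * m + 1) * (2 * m + 1 + 1) = 2 * ((2 * m + 1) * (m + 1)) by ring]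
      exact Nat.mul_div_cancel_left _ two_pos]
    rw [Int.negSucc_eq]
    push_cast
    ring

lemma psi_neg_mul {q : ℝ} (h0 : 0 < q) (h1 : q < 1) :
    psi (-q) * eulerProd (q ^ 2) = eulerProd q * eulerProd (q ^ 4) := by
  have hq : |q| < 1 := by rwa [abs_of_pos h0]
  have hq2 : |q ^ 2| < 1 := by
    rw [abs_pow]; exact pow_lt_one₀ (abs_nonneg q) hq two_ne_zero
  have h := tsum_zpow_quadratic (w := -q) (by rwa [abs_neg]) (neg_ne_zero.2 h0.ne') two_ne_zero 1
  have hodd : qProd (-q) (q ^ 2) = qProd (-q) (q ^ 4) * qProd (-q ^ 3) (q ^ 4) := by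
    rw [qProd_eq_prod hq2 (-q) (d := 2) (by norm_num)]
    simp only [prod_range_succ, prod_range_zero]
    ring_nf
  norm_num at h
  norm_cast at h
  rw [Odd.neg_pow (by decide)] at h
  rw [psi_eq_tsum_int, h, ← qProd_neg_mul_eulerProd_sq hq, hodd]
  ring

lemma psi_neg_mul_phi_neg {q : ℝ} (h0 : 0 < q) (h1 : q < 1) :
    psi (-q) * phi (-q ^ 2) = eulerProd q * eulerProd (q ^ 2) := by
  have hpos : ∀ n : ℕ, n ≠ 0 → 0 < eulerProd (q ^ n) := fun n hn ↦
    eulerProd_pos (by positivity) (pow_lt_one₀ h0.le h1 hn)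
  have hpsi := psi_neg_mul h0 h1
  have hphi := phi_neg_mul (q := q ^ 2) (by positivity) (pow_lt_one₀ h0.le h1 two_ne_zero)
  rw [← pow_mul] at hphi
  norm_num at hphi
  have h2 := (hpos 2 (by norm_num)).ne'
  have h4 := (hpos 4 (by norm_num)).ne'
  refine mul_right_cancel₀ (mul_ne_zero h2 h4) ?_
  linear_combination phi (-q ^ 2) * eulerProd (q ^ 4) * hpsi +
    eulerProd q * eulerProd (q ^ 4) * hphi

lemma shiftTheta_zero_neg_mul {q : ℝ} (h0 : 0 < q) (h1 : q < 1) :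
    shiftTheta 0 (-q) * eulerProd (q ^ 2) = eulerProd q ^ 2 := by
  rw [← phi_neg_mul h0 h1, shiftTheta, phi]
  simp

lemma shiftTheta_neg_one_mul {w : ℝ} (h0 : 0 < w) (h1 : w < 1) :
    shiftTheta (-1) w * eulerProd (w ^ 2) = 2 * eulerProd (w ^ 4) ^ 2 := by
  have hw : |w| < 1 := by rwa [abs_of_pos h0]
  have hw2 : |w ^ 2| < 1 := by
    rw [abs_pow]; exact pow_lt_one₀ (abs_nonneg w) hw two_ne_zero
  have h := tsum_zpow_quadratic hw h0.ne' one_ne_zero (-1)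
  norm_num at h
  norm_cast at h
  have he := qProd_mul_eulerProd hw2
  rw [← pow_mul] at he
  norm_num at he
  have hone := qProd_eq_mul hw2 1
  rw [one_mul] at hone
  rw [shiftTheta, ← he]
  simp only [neg_one_mul, ← sub_eq_add_neg] at h ⊢
  rw [h, hone]
  ring

lemma quinticTheta_neg_one_mul {w : ℝ} (h0 : 0 < w) (h1 : w < 1) :
    w ^ 3 * (quinticTheta (-1) 1 w * quinticTheta (-1) 2 w) * (eulerProd (w ^ 2) *
      eulerProd (w ^ 20)) = eulerProd (w ^ 4) * eulerProd (w ^ 10) ^ 3 := by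
  have hw : |w| < 1 := by rwa [abs_of_pos h0]
  have hw2 : |w ^ 2| < 1 := by
    rw [abs_pow]; exact pow_lt_one₀ (abs_nonneg w) hw two_ne_zero
  have hw10 : |w ^ 10| < 1 := by
    rw [abs_pow]; exact pow_lt_one₀ (abs_nonneg w) hw (by norm_num)
  have hK1 : w * quinticTheta (-1) 1 w = ∑' n : ℤ, w ^ ((5 : ℕ) * n ^ 2 + (-3) * n : ℤ) := by
    rw [quinticTheta, ← tsum_mul_left]
    refine tsum_congr fun m ↦ ?_
    rw [← zpow_one_add₀ h0.ne']
    congr 1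
    push_cast
    ring
  have hK2 : w ^ 2 * quinticTheta (-1) 2 w = ∑' n : ℤ, w ^ ((5 : ℕ) * n ^ 2 + (-1) * n : ℤ) := by
    rw [quinticTheta, ← tsum_mul_left]
    refine tsum_congr fun m ↦ ?_
    rw [← zpow_natCast w 2, ← zpow_add₀ h0.ne']
    congr 1
    push_cast
    ring
  rw [tsum_zpow_quadratic hw h0.ne' (by norm_num)] at hK1 hK2
  norm_num at hK1 hK2
  have hdis : qProd (w ^ 2) (w ^ 2) = qProd (w ^ 2) (w ^ 10) * qProd (w ^ 4) (w ^ 10) *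
      qProd (w ^ 6) (w ^ 10) * qProd (w ^ 8) (w ^ 10) * qProd (w ^ 10) (w ^ 10) := by
    rw [qProd_eq_prod hw2 (w ^ 2) (d := 5) (by norm_num)]
    simp only [prod_range_succ, prod_range_zero]
    ring_nf
  have e2 := qProd_mul_eulerProd hw2
  have e10 := qProd_mul_eulerProd hw10
  rw [← pow_mul] at e2 e10
  norm_num at e2 e10
  rw [hdis] at e2
  rw [← e2, ← e10]
  calc _ = (w * quinticTheta (-1) 1 w) * (w ^ 2 * quinticTheta (-1) 2 w) * (eulerProd (w ^ 2) *
      (qProd (w ^ 10) (w ^ 10) * eulerProd (w ^ 10))) := by ring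
    _ = _ := by rw [hK1, hK2]; ring

lemma quinticTheta_zero_neg_mul {q : ℝ} (h0 : 0 < q) (h1 : q < 1) :
    quinticTheta 0 1 (-q) * quinticTheta 0 2 (-q) * (eulerProd (q ^ 2) * eulerProd (q ^ 5)) =
      eulerProd q * eulerProd (q ^ 10) ^ 3 := by
  have hq : |q| < 1 := by rwa [abs_of_pos h0]
  have hq2 : |q ^ 2| < 1 := by
    rw [abs_pow]; exact pow_lt_one₀ (abs_nonneg q) hq two_ne_zero
  have hq5 : |q ^ 5| < 1 := by
    rw [abs_pow]; exact pow_lt_one₀ (abs_nonneg q) hq (by norm_num)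
  have hn : |-q| < 1 := by rwa [abs_neg]
  have hn0 : -q ≠ 0 := neg_ne_zero.2 h0.ne'
  have hK : ∀ j : ℤ, quinticTheta 0 j (-q) =
      ∑' n : ℤ, (-q) ^ ((5 : ℕ) * n ^ 2 + (2 * j) * n : ℤ) := by
    intro j
    refine tsum_congr fun m ↦ ?_
    congr 1
    push_cast
    ring
  have hK1 := hK 1
  have hK2 := hK 2
  rw [tsum_zpow_quadratic hn hn0 (by norm_num)] at hK1 hK2
  norm_num at hK1 hK2
  norm_cast at hK1 hK2
  simp only [Odd.neg_pow (show Odd 7 by decide), Odd.neg_pow (show Odd 3 by decide),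
    Odd.neg_pow (show Odd 9 by decide)] at hK1 hK2
  have hdis : qProd (-q) (q ^ 2) = qProd (-q) (q ^ 10) * qProd (-q ^ 3) (q ^ 10) *
      qProd (-q ^ 5) (q ^ 10) * qProd (-q ^ 7) (q ^ 10) * qProd (-q ^ 9) (q ^ 10) := by
    rw [qProd_eq_prod hq2 (-q) (d := 5) (by norm_num)]
    simp only [prod_range_succ, prod_range_zero]
    ring_nf
  have e1 := qProd_neg_mul_eulerProd_sq hq
  have e5 := qProd_neg_mul_eulerProd_sq hq5
  rw [← pow_mul] at e5
  norm_num at e5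
  rw [hdis] at e1
  rw [← e1, ← e5, hK1, hK2]
  ring

/-! ### Modular relations of level ten -/

lemma eulerProd_pow_pos {q : ℝ} (h0 : 0 < q) (h1 : q < 1) {n : ℕ} (hn : n ≠ 0) :
    0 < eulerProd (q ^ n) :=
  eulerProd_pos (by positivity) (pow_lt_one₀ h0.le h1 hn)

lemma eulerProd_relation_add {q : ℝ} (h0 : 0 < q) (h1 : q < 1) :
    eulerProd (q ^ 2) ^ 4 * eulerProd (q ^ 5) ^ 2 * eulerProd (q ^ 10) =
      q * eulerProd q ^ 2 * eulerProd (q ^ 10) ^ 5 +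
        eulerProd q * eulerProd (q ^ 2) * eulerProd (q ^ 5) ^ 5 := by
  obtain ⟨w, hw0, rfl⟩ : ∃ w : ℝ, 0 < w ∧ w ^ 2 = q :=
    ⟨√q, Real.sqrt_pos.2 h0, Real.sq_sqrt h0.le⟩
  have hw1 : w < 1 := by nlinarith
  have hsq := shiftTheta_sq (by rwa [abs_of_pos hw0]) hw0.ne' (-1)
  have hH := shiftTheta_neg_one_mul hw0 hw1
  have hH5 := shiftTheta_neg_one_mul (pow_pos hw0 5) (pow_lt_one₀ hw0.le hw1 (by norm_num))
  have hK := quinticTheta_neg_one_mul hw0 hw1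
  norm_num [zpow_ofNat] at hsq
  simp only [← pow_mul] at *
  norm_num at *
  linear_combination (1 / 4) * eulerProd (w ^ 2) ^ 2 * eulerProd (w ^ 10) ^ 2 *
      eulerProd (w ^ 20) * hsq -
    (1 / 4) * eulerProd (w ^ 10) ^ 2 * eulerProd (w ^ 20) *
      (shiftTheta (-1) w * eulerProd (w ^ 2) + 2 * eulerProd (w ^ 4) ^ 2) * hH +
    (1 / 4) * w ^ 2 * eulerProd (w ^ 2) ^ 2 * eulerProd (w ^ 20) *
      (shiftTheta (-1) (w ^ 5) * eulerProd (w ^ 10) + 2 * eulerProd (w ^ 20) ^ 2) * hH5 +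
    eulerProd (w ^ 2) * eulerProd (w ^ 10) ^ 2 * hK

lemma eulerProd_relation_sub {q : ℝ} (h0 : 0 < q) (h1 : q < 1) :
    eulerProd q ^ 4 * eulerProd (q ^ 10) ^ 2 * eulerProd (q ^ 5) =
      eulerProd (q ^ 5) ^ 5 * eulerProd (q ^ 2) ^ 2 -
        4 * q * eulerProd q * eulerProd (q ^ 2) * eulerProd (q ^ 10) ^ 5 := by
  have hsq := shiftTheta_sq (w := -q) (by rwa [abs_neg, abs_of_pos h0]) (neg_ne_zero.2 h0.ne') 0
  have hT := shiftTheta_zero_neg_mul h0 h1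
  have hT5 := shiftTheta_zero_neg_mul (pow_pos h0 5) (pow_lt_one₀ h0.le h1 (by norm_num))
  have hK := quinticTheta_zero_neg_mul h0 h1
  rw [Odd.neg_pow (by decide)] at hsq
  norm_num at hsq
  simp only [← pow_mul] at *
  norm_num at *
  linear_combination eulerProd (q ^ 2) ^ 2 * eulerProd (q ^ 10) ^ 2 * eulerProd (q ^ 5) * hsq -
    eulerProd (q ^ 10) ^ 2 * eulerProd (q ^ 5) *
      (shiftTheta 0 (-q) * eulerProd (q ^ 2) + eulerProd q ^ 2) * hT +
    eulerProd (q ^ 2) ^ 2 * eulerProd (q ^ 5) *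
      (shiftTheta 0 (-q ^ 5) * eulerProd (q ^ 10) + eulerProd (q ^ 5) ^ 2) * hT5 -
    4 * q * eulerProd (q ^ 2) * eulerProd (q ^ 10) ^ 2 * hK

/-- The level ten modular function `q f₁ f₁₀⁵ / (f₂ f₅⁵)`, where `fᵢ = eulerProd (q ^ i)`. -/
noncomputable def quinticParam (q : ℝ) : ℝ :=
  q * eulerProd q * eulerProd (q ^ 10) ^ 5 / (eulerProd (q ^ 2) * eulerProd (q ^ 5) ^ 5)

lemma quinticParam_pos {q : ℝ} (h0 : 0 < q) (h1 : q < 1) : 0 < quinticParam q := by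
  have := eulerProd_pos h0.le h1
  have := eulerProd_pow_pos h0 h1 (n := 2) (by norm_num)
  have := eulerProd_pow_pos h0 h1 (n := 5) (by norm_num)
  have := eulerProd_pow_pos h0 h1 (n := 10) (by norm_num)
  unfold quinticParam
  positivity

lemma one_add_quinticParam {q : ℝ} (h0 : 0 < q) (h1 : q < 1) :
    1 + quinticParam q =
      eulerProd (q ^ 2) ^ 3 * eulerProd (q ^ 10) / (eulerProd q * eulerProd (q ^ 5) ^ 3) := by
  have := eulerProd_pos h0.le h1
  have := eulerProd_pow_pos h0 h1 (n := 2) (by norm_num)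
  have := eulerProd_pow_pos h0 h1 (n := 5) (by norm_num)
  unfold quinticParam
  field_simp
  linear_combination -eulerProd_relation_add h0 h1

lemma one_sub_quinticParam {q : ℝ} (h0 : 0 < q) (h1 : q < 1) :
    1 - 4 * quinticParam q =
      eulerProd q ^ 4 * eulerProd (q ^ 10) ^ 2 /
        (eulerProd (q ^ 2) ^ 2 * eulerProd (q ^ 5) ^ 4) := by
  have := eulerProd_pos h0.le h1
  have := eulerProd_pow_pos h0 h1 (n := 2) (by norm_num)
  have := eulerProd_pow_pos h0 h1 (n := 5) (by norm_num)
  unfold quinticParam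
  field_simp
  linear_combination -eulerProd_relation_sub h0 h1

lemma one_sub_quinticParam_pos {q : ℝ} (h0 : 0 < q) (h1 : q < 1) :
    0 < 1 - 4 * quinticParam q := by
  have := eulerProd_pos h0.le h1
  have := eulerProd_pow_pos h0 h1 (n := 2) (by norm_num)
  have := eulerProd_pow_pos h0 h1 (n := 5) (by norm_num)
  have := eulerProd_pow_pos h0 h1 (n := 10) (by norm_num)
  rw [one_sub_quinticParam h0 h1]
  positivity

/-- The relation between the parameters at `q` and at `q ^ 2`. -/
lemma quinticParam_sq_relation {q : ℝ} (h0 : 0 < q) (h1 : q < 1) :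
    quinticParam q ^ 2 + 2 * quinticParam q * quinticParam (q ^ 2) +
      4 * quinticParam q * quinticParam (q ^ 2) ^ 2 - quinticParam (q ^ 2) = 0 := by
  have hq0 : 0 < q ^ 2 := by positivity
  have hq1 : q ^ 2 < 1 := pow_lt_one₀ h0.le h1 two_ne_zero
  have hk := quinticParam_pos h0 h1
  have hl := quinticParam_pos hq0 hq1
  have h1p := eulerProd_pos h0.le h1
  have h2p := eulerProd_pow_pos h0 h1 (n := 2) (by norm_num)
  have h5p := eulerProd_pow_pos h0 h1 (n := 5) (by norm_num)
  have h10p := eulerProd_pow_pos h0 h1 (n := 10) (by norm_num)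
  have h4p := eulerProd_pow_pos h0 h1 (n := 4) (by norm_num)
  have h20p := eulerProd_pow_pos h0 h1 (n := 20) (by norm_num)
  have hA : (1 + quinticParam q) ^ 2 * (1 - 4 * quinticParam q) / quinticParam q ^ 2 =
      eulerProd (q ^ 2) ^ 6 / (q ^ 2 * eulerProd (q ^ 10) ^ 6) := by
    rw [one_add_quinticParam h0 h1, one_sub_quinticParam h0 h1, quinticParam]
    field_simp
  have hB : (1 + quinticParam (q ^ 2)) * (1 - 4 * quinticParam (q ^ 2)) ^ 2 /
      quinticParam (q ^ 2) = eulerProd (q ^ 2) ^ 6 / (q ^ 2 * eulerProd (q ^ 10) ^ 6) := by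
    rw [one_add_quinticParam hq0 hq1, one_sub_quinticParam hq0 hq1, quinticParam]
    simp only [← pow_mul]
    norm_num
    field_simp
  have hAB := hA.trans hB.symm
  rw [div_eq_div_iff (by positivity) (by positivity)] at hAB
  have hne : 1 + 4 * quinticParam q * quinticParam (q ^ 2) ≠ 0 := by positivity
  refine (mul_eq_zero.1 ?_).resolve_left hne
  linear_combination -hAB

/-- Elimination of the middle variable between two consecutive quadratic relations. -/
lemma resultant_eq_zero {k l n : ℝ} (hl : l ≠ 0) (hkl : k ^ 2 + 2 * k * l + 4 * k * l ^ 2 - l = 0)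
    (hln : l ^ 2 + 2 * l * n + 4 * l * n ^ 2 - n = 0) :
    k ^ 2 * (4 * n + k) ^ 2 + (1 - 2 * k + 8 * k * n + 16 * k * n ^ 2) * n *
      (2 * k - 1 + 2 * k ^ 2 + 4 * k ^ 2 * n) = 0 := by
  have hE : (-(4 * k * n) - k ^ 2) * l +
      (-((2 * k - 1) * n) - k ^ 2 * (2 * n + 4 * n ^ 2)) = 0 := by
    refine (mul_eq_zero.1 ?_).resolve_left hl
    linear_combination -n * hkl - k ^ 2 * hln
  linear_combination (2 * k - 1 - 4 * k * (2 * n + 4 * n ^ 2)) * hE +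
    (4 * k * n + k ^ 2) * (hkl - 4 * k * hln)

lemma b_five_eq {s q : ℝ} (h0 : 0 < q) (h1 : q < 1) (hq : q = Real.exp (-(π * √(s / 5)))) :
    b s 5 = 5 * quinticParam q / ((1 + quinticParam q) * (1 - 4 * quinticParam q)) := by
  have hs5 : √(s * 5) = 5 * √(s / 5) := by
    rw [show s * 5 = 5 ^ 2 * (s / 5) by ring, Real.sqrt_mul (by norm_num),
      Real.sqrt_sq (by norm_num)]
  have e1 : Real.exp (-((5 - 1) * (π / 4) * √(s / 5))) = q := by rw [hq]; ring_nf
  have e2 : Real.exp (-(2 * π * √(s / 5))) = q ^ 2 := by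
    rw [hq, ← Real.exp_nat_mul]; push_cast; ring_nf
  have e5 : Real.exp (-(π * √(s * 5))) = q ^ 5 := by
    rw [hq, ← Real.exp_nat_mul, hs5]; push_cast; ring_nf
  have e10 : Real.exp (-(2 * π * √(s * 5))) = (q ^ 5) ^ 2 := by
    rw [← e5, ← Real.exp_nat_mul]; push_cast; ring_nf
  have h1p := eulerProd_pos h0.le h1
  have h2p := eulerProd_pow_pos h0 h1 (n := 2) (by norm_num)
  have h5p := eulerProd_pow_pos h0 h1 (n := 5) (by norm_num)
  have h10p := eulerProd_pow_pos h0 h1 (n := 10) (by norm_num)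
  have hN := psi_neg_mul_phi_neg (pow_pos h0 5) (pow_lt_one₀ h0.le h1 (by norm_num))
  have hD := psi_neg_mul_phi_neg h0 h1
  rw [b, e1, e2, e5, e10, ← hq, mul_assoc (5 * q), ← mul_pow, ← mul_pow, hN, hD,
    one_add_quinticParam h0 h1, one_sub_quinticParam h0 h1, quinticParam, ← pow_mul]
  norm_num
  field_simp

/-- The polynomial relation between two values of `5 k / ((1 + k) (1 - 4 k))` whose parameters
are annihilated by the resultant of `resultant_eq_zero`. -/
def degreeFourPoly (x z : ℝ) : ℝ :=
  x ^ 8 + z ^ 8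
      - 52 * (x ^ 7 * z + x * z ^ 7)
      - 1024 * (x ^ 6 * z ^ 2 + x ^ 2 * z ^ 6)
      - 3987 * (x ^ 5 * z ^ 3 + x ^ 3 * z ^ 5)
      - 5380 * (x ^ 5 * z ^ 4 + x ^ 4 * z ^ 5 + x ^ 4 * z ^ 3 + x ^ 3 * z ^ 4)
      - 1920 * (x ^ 6 * z ^ 3 + x ^ 5 * z ^ 2 + x ^ 3 * z ^ 6 + x ^ 2 * z ^ 5)
      - 175 * (x ^ 7 * z ^ 2 + x ^ 6 * z + x ^ 2 * z ^ 7 + x * z ^ 6)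
      - 2300 * (x ^ 6 * z ^ 4 + x ^ 4 * z ^ 6 + x ^ 4 * z ^ 2 + x ^ 2 * z ^ 4)
      - 200 * (x ^ 7 * z ^ 3 + x ^ 5 * z + x ^ 3 * z ^ 7 + x * z ^ 5)
      - 3725 * (x ^ 5 * z ^ 5 + x ^ 3 * z ^ 3)
      - 1500 * (x ^ 6 * z ^ 5 + x ^ 5 * z ^ 6 + x ^ 3 * z ^ 2 + x ^ 2 * z ^ 3)
      - 125 * (x ^ 7 * z ^ 4 + x ^ 4 * z ^ 7 + x ^ 4 * z + x * z ^ 4)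
      - 625 * (x ^ 6 * z ^ 6 + x ^ 2 * z ^ 2)
      - 7676 * x ^ 4 * z ^ 4

set_option maxHeartbeats 4000000 in
lemma degreeFourPoly_mul (k n v v' x z : ℝ) (hv : v = (1 + k) * (1 - 4 * k))
    (hv' : v' = (1 + n) * (1 - 4 * n)) (hx : x * v = 5 * k) (hz : z * v' = 5 * n) :
    degreeFourPoly x z * (v ^ 8 * v' ^ 8) =
      -390625 *
        (k ^ 2 * (4 * n + k) ^ 2 + (1 - 2 * k + 8 * k * n + 16 * k * n ^ 2) * n *
          (2 * k - 1 + 2 * k ^ 2 + 4 * k ^ 2 * n)) *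
        ((16 * n * k - 1) ^ 2 + 16 * k * n * (2 * k + 1 - 4 * n - 8 * n ^ 2) *
          (1 - 4 * k - 8 * k ^ 2 + 2 * n)) *
        (4 * n ^ 2 * k ^ 2 * (k * n - 1) ^ 2 - (n ^ 2 - 2 * k * n ^ 2 - 2 * k * n + k) *
          ((2 * k - 1 + 2 * k ^ 2) * n - k ^ 2)) *
        (n ^ 2 * (4 * k + n) ^ 2 - k * (4 * k * n ^ 2 + 2 * n ^ 2 + 2 * n - 1) *
          (2 * n - 1 - 8 * k * n - 16 * k ^ 2 * n)) := by
  have hhom : degreeFourPoly x z * (v ^ 8 * v' ^ 8) =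
      (x * v) ^ 8 * v' ^ 8 + v ^ 8 * (z * v') ^ 8
      - 52 * ((x * v) ^ 7 * v * (z * v') * v' ^ 7 + (x * v) * v ^ 7 * (z * v') ^ 7 * v')
      - 1024 * ((x * v) ^ 6 * v ^ 2 * (z * v') ^ 2 * v' ^ 6 +
          (x * v) ^ 2 * v ^ 6 * (z * v') ^ 6 * v' ^ 2)
      - 3987 * ((x * v) ^ 5 * v ^ 3 * (z * v') ^ 3 * v' ^ 5 +
          (x * v) ^ 3 * v ^ 5 * (z * v') ^ 5 * v' ^ 3)
      - 5380 * ((x * v) ^ 5 * v ^ 3 * (z * v') ^ 4 * v' ^ 4 +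
          (x * v) ^ 4 * v ^ 4 * (z * v') ^ 5 * v' ^ 3 +
          (x * v) ^ 4 * v ^ 4 * (z * v') ^ 3 * v' ^ 5 + (x * v) ^ 3 * v ^ 5 * (z * v') ^ 4 * v' ^ 4)
      - 1920 * ((x * v) ^ 6 * v ^ 2 * (z * v') ^ 3 * v' ^ 5 +
          (x * v) ^ 5 * v ^ 3 * (z * v') ^ 2 * v' ^ 6 +
          (x * v) ^ 3 * v ^ 5 * (z * v') ^ 6 * v' ^ 2 + (x * v) ^ 2 * v ^ 6 * (z * v') ^ 5 * v' ^ 3)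
      - 175 * ((x * v) ^ 7 * v * (z * v') ^ 2 * v' ^ 6 + (x * v) ^ 6 * v ^ 2 * (z * v') * v' ^ 7 +
          (x * v) ^ 2 * v ^ 6 * (z * v') ^ 7 * v' + (x * v) * v ^ 7 * (z * v') ^ 6 * v' ^ 2)
      - 2300 * ((x * v) ^ 6 * v ^ 2 * (z * v') ^ 4 * v' ^ 4 +
          (x * v) ^ 4 * v ^ 4 * (z * v') ^ 6 * v' ^ 2 +
          (x * v) ^ 4 * v ^ 4 * (z * v') ^ 2 * v' ^ 6 + (x * v) ^ 2 * v ^ 6 * (z * v') ^ 4 * v' ^ 4)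
      - 200 * ((x * v) ^ 7 * v * (z * v') ^ 3 * v' ^ 5 + (x * v) ^ 5 * v ^ 3 * (z * v') * v' ^ 7 +
          (x * v) ^ 3 * v ^ 5 * (z * v') ^ 7 * v' + (x * v) * v ^ 7 * (z * v') ^ 5 * v' ^ 3)
      - 3725 * ((x * v) ^ 5 * v ^ 3 * (z * v') ^ 5 * v' ^ 3 +
          (x * v) ^ 3 * v ^ 5 * (z * v') ^ 3 * v' ^ 5)
      - 1500 * ((x * v) ^ 6 * v ^ 2 * (z * v') ^ 5 * v' ^ 3 +
          (x * v) ^ 5 * v ^ 3 * (z * v') ^ 6 * v' ^ 2 +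
          (x * v) ^ 3 * v ^ 5 * (z * v') ^ 2 * v' ^ 6 + (x * v) ^ 2 * v ^ 6 * (z * v') ^ 3 * v' ^ 5)
      - 125 * ((x * v) ^ 7 * v * (z * v') ^ 4 * v' ^ 4 + (x * v) ^ 4 * v ^ 4 * (z * v') ^ 7 * v' +
          (x * v) ^ 4 * v ^ 4 * (z * v') * v' ^ 7 + (x * v) * v ^ 7 * (z * v') ^ 4 * v' ^ 4)
      - 625 * ((x * v) ^ 6 * v ^ 2 * (z * v') ^ 6 * v' ^ 2 +
          (x * v) ^ 2 * v ^ 6 * (z * v') ^ 2 * v' ^ 6)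
      - 7676 * (x * v) ^ 4 * v ^ 4 * (z * v') ^ 4 * v' ^ 4 := by
    unfold degreeFourPoly
    ring
  rw [hhom, hx, hz, hv, hv']
  ring

lemma degreeFourPoly_b {s : ℝ} (hs : 0 < s) :
    0 < b s 5 ∧ 0 < b (16 * s) 5 ∧ degreeFourPoly (b s 5) (b (16 * s) 5) = 0 := by
  obtain ⟨q, hq⟩ : ∃ q, q = Real.exp (-(π * √(s / 5))) := ⟨_, rfl⟩
  have h0 : 0 < q := hq ▸ Real.exp_pos _
  have h1 : q < 1 := by
    rw [hq, Real.exp_lt_one_iff, neg_lt_zero]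
    positivity
  have hq4 : q ^ 4 = Real.exp (-(π * √(16 * s / 5))) := by
    rw [show 16 * s / 5 = 4 ^ 2 * (s / 5) by ring, Real.sqrt_mul (by norm_num),
      Real.sqrt_sq (by norm_num), hq, ← Real.exp_nat_mul]
    push_cast
    ring_nf
  have h20 : 0 < q ^ 2 := by positivity
  have h21 : q ^ 2 < 1 := pow_lt_one₀ h0.le h1 two_ne_zero
  have h40 : 0 < q ^ 4 := by positivity
  have h41 : q ^ 4 < 1 := pow_lt_one₀ h0.le h1 four_ne_zero
  have hk := quinticParam_pos h0 h1
  have hn := quinticParam_pos h40 h41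
  have hk4 := one_sub_quinticParam_pos h0 h1
  have hn4 := one_sub_quinticParam_pos h40 h41
  have hln := quinticParam_sq_relation h20 h21
  rw [← pow_mul] at hln
  have hR := resultant_eq_zero (quinticParam_pos h20 h21).ne' (quinticParam_sq_relation h0 h1) hln
  have hx := b_five_eq h0 h1 hq
  have hz := b_five_eq h40 h41 hq4
  refine ⟨by rw [hx]; positivity, by rw [hz]; positivity, ?_⟩
  have hW := degreeFourPoly_mul _ _ _ _ _ _ rfl rfl ((eq_div_iff (by positivity)).1 hx)
    ((eq_div_iff (by positivity)).1 hz)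
  rw [hR, mul_zero, zero_mul, zero_mul, zero_mul] at hW
  exact (mul_eq_zero.1 hW).resolve_right (by positivity)

theorem stmt_11 (s X Y : ℝ) (hs : 0 < s)
    (hX : X = Real.sqrt (b s 5 * b (16 * s) 5))
    (hY : Y = Real.sqrt (b s 5 / b (16 * s) 5)) :
    (Y ^ 8 + 1 / Y ^ 8) - 52 * (Y ^ 6 + 1 / Y ^ 6) - 1024 * (Y ^ 4 + 1 / Y ^ 4)
      - 3987 * (Y ^ 2 + 1 / Y ^ 2)
      - 5 * (X + 1 / X) * (1076 * (Y + 1 / Y) + 384 * (Y ^ 3 + 1 / Y ^ 3)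
          + 35 * (Y ^ 5 + 1 / Y ^ 5))
      - 5 ^ 2 * (X ^ 2 + 1 / X ^ 2) * (92 * (Y ^ 2 + 1 / Y ^ 2)
          + 8 * (Y ^ 4 + 1 / Y ^ 4) + 149)
      - 5 ^ 3 * (X ^ 3 + 1 / X ^ 3) * (12 * (Y + 1 / Y) + (Y ^ 3 + 1 / Y ^ 3))
      - 5 ^ 4 * (X ^ 4 + 1 / X ^ 4) - 7676 = 0 := by
  obtain ⟨hx, hz, hW⟩ := degreeFourPoly_b hs
  have hX0 : 0 < X := by rw [hX]; positivity
  have hY0 : 0 < Y := by rw [hY]; positivity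
  have hXY : b s 5 = X * Y := by
    rw [hX, hY, ← Real.sqrt_mul (by positivity),
      show b s 5 * b (16 * s) 5 * (b s 5 / b (16 * s) 5) = b s 5 ^ 2 by field_simp,
      Real.sqrt_sq hx.le]
  have hXdY : b (16 * s) 5 = X / Y := by
    rw [hX, hY, ← Real.sqrt_div (by positivity),
      show b s 5 * b (16 * s) 5 / (b s 5 / b (16 * s) 5) = b (16 * s) 5 ^ 2 by field_simp,
      Real.sqrt_sq hz.le]
  rw [hXY, hXdY] at hW
  have hX8 : X ^ 8 ≠ 0 := by positivity
  refine (mul_eq_zero.1 ?_).resolve_left hX8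
  rw [← hW, degreeFourPoly]
  field_simp
  ring
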